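/- Let α be a nonempty left weak composition and let n be a positive integer. Then, in the free ℚ-module on finite lists of nonnegative integers equipped with the quasi-shuffle product * over the additive monoid ℕ, the element (α·0^n) − (0^n * α) lies in the ℚ-linear span of the lists (γ·0^j) with γ a left weak composition and 0 ≤ j < n; here 0^n denotes the list of n zeros and · denotes concatenation of lists. -/

import Mathlib

open Finset

/-- quasi-shuffle product on the free ℚ-module on lists over an additive commutative monoid -/
noncomputable def qsh {A : Type} [AddCommMonoid A] : List A → List A → (List A →₀ ℚ)
  | [], b => Finsupp.single b 1
  | a :: a', [] => Finsupp.single (a :: a') 1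
  | a :: a', b :: b' =>
      (qsh a' (b :: b')).mapDomain (a :: ·) +
      (qsh (a :: a') b').mapDomain (b :: ·) +
      (qsh a' b').mapDomain ((a + b) :: ·)
termination_by a b => a.length + b.length

/-- a left weak composition: empty or last entry positive -/
def LeftWeak (l : List ℕ) : Prop := ∀ a : ℕ, l.getLast? = some a → 0 < a

/-
Since `0 + b = b`, the recursion for `0^(n+1) * (b·l)` reads
`0·(0^n * (b·l)) + b·(0^(n+1) * l) + b·(0^n * l)`. The middle term has one letter fewer in its
right factor and produces the leading word `b·l·0^(n+1)`. The other two involve only `0^n`, so if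
`a` is the last letter of `b·l`, induction on `n` makes them combinations of words `γ·a·0^j` with
`j ≤ n` (when `l` is empty, the last term is just `a·0^n`). One therefore inducts on `n`, and for
fixed `n` on the length of the right factor.
-/

section PaddedConcat

variable {A : Type*} [Zero A]

/-- The words `γ·a·0^j` with `j < n`, whose span contains the error term of `0^n * (α·a)`. Fixing
the letter `a` before the padding, instead of asking that it be positive, makes sense over any
monoid. -/
def paddedConcat (a : A) (n : ℕ) : Set (List A) :=
  {l | ∃ γ j, j < n ∧ γ ++ [a] ++ List.replicate j 0 = l}

theorem paddedConcat_mono (a : A) : Monotone (paddedConcat a) :=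
  fun _ _ hmn _ ⟨γ, j, hj, hl⟩ => ⟨γ, j, hj.trans_le hmn, hl⟩

theorem concat_replicate_mem_paddedConcat (γ : List A) (a : A) (n : ℕ) :
    γ ++ [a] ++ List.replicate n 0 ∈ paddedConcat a (n + 1) :=
  ⟨γ, n, n.lt_succ_self, rfl⟩

theorem mapsTo_cons_paddedConcat (a b : A) (n : ℕ) :
    Set.MapsTo (b :: ·) (paddedConcat a n) (paddedConcat a n) := by
  rintro _ ⟨γ, j, hj, rfl⟩
  exact ⟨b :: γ, j, hj, rfl⟩

theorem mapDomain_cons_mem_supported_paddedConcat {a : A} {n : ℕ} (b : A) {x : List A →₀ ℚ}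
    (hx : x ∈ Finsupp.supported ℚ ℚ (paddedConcat a n)) :
    x.mapDomain (b :: ·) ∈ Finsupp.supported ℚ ℚ (paddedConcat a n) := by
  have hmap := Submodule.mem_map_of_mem (f := Finsupp.lmapDomain ℚ ℚ (b :: ·)) hx
  rw [Finsupp.lmapDomain_supported] at hmap
  exact Finsupp.supported_mono (mapsTo_cons_paddedConcat a b n).image_subset hmap

end PaddedConcat

section QuasiShuffle

variable {A : Type} [AddCommMonoid A]

theorem qsh_nil_right (l : List A) : qsh l [] = Finsupp.single l 1 := by
  cases l <;> simp only [qsh]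

theorem single_append_sub_qsh_replicate_cons (b : A) (l : List A) (n : ℕ) :
    Finsupp.single (b :: l ++ List.replicate (n + 1) 0) (1 : ℚ)
        - qsh (List.replicate (n + 1) 0) (b :: l) =
      (Finsupp.single (l ++ List.replicate (n + 1) 0) (1 : ℚ)
        - qsh (List.replicate (n + 1) 0) l).mapDomain (b :: ·)
      - (qsh (List.replicate n 0) (b :: l)).mapDomain (0 :: ·)
      - (qsh (List.replicate n 0) l).mapDomain (b :: ·) := by
  rw [Finsupp.mapDomain_sub, Finsupp.mapDomain_single, List.cons_append, List.replicate_succ, qsh,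
    zero_add]
  abel

theorem qsh_replicate_mem_supported_succ {α : List A} {a : A} {n : ℕ}
    (h : Finsupp.single (α ++ [a] ++ List.replicate n 0) (1 : ℚ)
        - qsh (List.replicate n 0) (α ++ [a]) ∈ Finsupp.supported ℚ ℚ (paddedConcat a n)) :
    qsh (List.replicate n 0) (α ++ [a]) ∈ Finsupp.supported ℚ ℚ (paddedConcat a (n + 1)) := by
  have hlead : Finsupp.single (α ++ [a] ++ List.replicate n 0) (1 : ℚ) ∈
      Finsupp.supported ℚ ℚ (paddedConcat a (n + 1)) :=
    Finsupp.single_mem_supported ℚ 1 (concat_replicate_mem_paddedConcat α a n)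
  rw [← Submodule.sub_mem_iff_right _ hlead]
  exact Finsupp.supported_mono (paddedConcat_mono a n.le_succ) h

theorem stmt19_general (α : List A) (a : A) (n : ℕ) :
    Finsupp.single (α ++ [a] ++ List.replicate n 0) (1 : ℚ)
        - qsh (List.replicate n 0) (α ++ [a]) ∈
      Finsupp.supported ℚ ℚ (paddedConcat a n) := by
  induction n generalizing α with
  | zero => simp [qsh]
  | succ n ih =>
    have hqsh (β : List A) : qsh (List.replicate n 0) (β ++ [a]) ∈
        Finsupp.supported ℚ ℚ (paddedConcat a (n + 1)) :=
      qsh_replicate_mem_supported_succ (ih β)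
    induction α with
    | nil =>
      have hpad : (qsh (List.replicate n 0) []).mapDomain (a :: ·) ∈
          Finsupp.supported ℚ ℚ (paddedConcat a (n + 1)) := by
        rw [qsh_nil_right, Finsupp.mapDomain_single]
        exact Finsupp.single_mem_supported ℚ 1 (concat_replicate_mem_paddedConcat [] a n)
      rw [List.nil_append, single_append_sub_qsh_replicate_cons, qsh_nil_right, List.nil_append,
        sub_self, Finsupp.mapDomain_zero]
      exact sub_mem (sub_mem (zero_mem _)
        (mapDomain_cons_mem_supported_paddedConcat 0 (hqsh []))) hpad
    | cons b β ihα =>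
      rw [List.cons_append, single_append_sub_qsh_replicate_cons]
      exact sub_mem (sub_mem (mapDomain_cons_mem_supported_paddedConcat b ihα)
        (mapDomain_cons_mem_supported_paddedConcat 0 (hqsh (b :: β))))
        (mapDomain_cons_mem_supported_paddedConcat b (hqsh β))

end QuasiShuffle

theorem leftWeak_concat {γ : List ℕ} {a : ℕ} : LeftWeak (γ ++ [a]) ↔ 0 < a := by
  simp [LeftWeak]

theorem supported_paddedConcat_le_span {a : ℕ} (ha : 0 < a) (n : ℕ) :
    Finsupp.supported ℚ ℚ (paddedConcat a n) ≤
      Submodule.span ℚ {x : List ℕ →₀ ℚ | ∃ (γ : List ℕ) (j : ℕ),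
        LeftWeak γ ∧ j < n ∧ x = Finsupp.single (γ ++ List.replicate j 0) (1 : ℚ)} := by
  rw [Finsupp.supported_eq_span_single]
  refine Submodule.span_mono ?_
  rintro _ ⟨_, ⟨γ, j, hj, rfl⟩, rfl⟩
  exact ⟨γ ++ [a], j, leftWeak_concat.2 ha, hj, rfl⟩

/-- For a nonempty left weak composition α and a positive integer n, the
element (α·0^n) − (0^n * α) of the free ℚ-module on finite lists over ℕ (with the
quasi-shuffle product * over ℕ) lies in the ℚ-linear span of the lists (γ·0^j) with γ left
weak and 0 ≤ j < n. -/
theorem stmt19 (α : List ℕ) (hne : α ≠ []) (h : LeftWeak α) (n : ℕ) (hn : 0 < n) :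
    Finsupp.single (α ++ List.replicate n 0) (1 : ℚ) - qsh (List.replicate n 0) α ∈
      Submodule.span ℚ {x : List ℕ →₀ ℚ | ∃ (γ : List ℕ) (j : ℕ),
        LeftWeak γ ∧ j < n ∧ x = Finsupp.single (γ ++ List.replicate j 0) (1 : ℚ)} := by
  obtain ⟨β, a, rfl⟩ := α.eq_nil_or_concat'.resolve_left hne
  exact supported_paddedConcat_le_span (leftWeak_concat.1 h) n (stmt19_general β a n)
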